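/- Let f ∈ A₁(c), set t = f′(c₁), and let m be a real number such that f(x) ≥ m for all x ∈ (−1,1). Then for every x ∈ (−1,c₁): f(x) ≥ c₃ − t·(c₁−x) + (t·(1+c₁) + m − c₃)·(x−c₁)²/(1+c₁)². -/

import Mathlib

open Set Complex

noncomputable section

/-- The doubly-slit plane `ℂ(J)` for `J ⊆ ℝ`. -/
def CSlit (J : Set ℝ) : Set ℂ := {z : ℂ | z.im ≠ 0 ∨ z.re ∈ J}

/-- `ℂ₁ = ℂ((−1,1))`. -/
def C1 : Set ℂ := CSlit (Set.Ioo (-1 : ℝ) 1)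

/-- The class `A₁(c)` of normalized Herglotz functions. -/
structure MemA1 (c₁ c₂ c₃ c₄ : ℝ) (f : ℂ → ℂ) : Prop where
  holo : DifferentiableOn ℂ f C1
  maps : Set.MapsTo f C1 C1
  symm : ∀ z ∈ C1, f (starRingEnd ℂ z) = starRingEnd ℂ (f z)
  upper : ∀ z ∈ C1, 0 < z.im → 0 ≤ (f z).im
  lower : ∀ z ∈ C1, z.im < 0 → (f z).im ≤ 0
  val1 : f (c₁ : ℂ) = (c₃ : ℂ)
  val2 : f (c₂ : ℂ) = (c₄ : ℂ)

/-!
On the real interval a Pick function `f` satisfies the Loewner inequality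
`(f x - f y)² ≤ (x - y)² f'(x) f'(y)`, which is the Schwarz–Pick inequality for the upper half-plane
at the points `x + iε`, `y + iε` in the limit `ε → 0`. By AM–GM it gives the trapezoid inequality
`2 (f c - f x) ≤ (c - x) (f'(x) + f'(c))` for `x < c`, which says exactly that the derivative of
the divided difference `(f x - f c - f'(c) (x - c)) / (x - c)²` is nonnegative for `x < c`. So its
value at `x` is at least its values near the left endpoint, where `f` is bounded below by `m`.
-/

open Filter Topology Metric
open UpperHalfPlane (upperHalfPlaneSet)
open scoped ComplexConjugate

section SchwarzPick

variable {z w ζ : ℂ}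

/-- The Cayley transform centred at `w`: for `0 < w.im` it maps the upper half-plane onto the unit
disc and `w` to `0`. -/
def cayley (w z : ℂ) : ℂ := (z - w) / (z - conj w)

/-- The inverse of the Cayley transform centred at `w`, from the unit disc to the upper
half-plane. -/
def cayleyInv (w ζ : ℂ) : ℂ := (w - conj w * ζ) / (1 - ζ)

lemma normSq_sub_conj (z w : ℂ) :
    normSq (z - conj w) = normSq (z - w) + 4 * (z.im * w.im) := by
  simp only [normSq_apply, sub_re, sub_im, conj_re, conj_im]
  ring

lemma sub_conj_ne_zero (hw : 0 < w.im) (hz : 0 ≤ z.im) : z - conj w ≠ 0 := fun h ↦ by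
  have him : z.im + w.im = 0 := by simpa using congrArg im h
  linarith

lemma norm_cayley_sq (z w : ℂ) :
    ‖cayley w z‖ ^ 2 = normSq (z - w) / (normSq (z - w) + 4 * (z.im * w.im)) := by
  rw [← normSq_eq_norm_sq, cayley, normSq_div, normSq_sub_conj]

lemma norm_cayley_le_one (hw : 0 < w.im) (hz : 0 ≤ z.im) : ‖cayley w z‖ ≤ 1 := by
  have hdist := normSq_nonneg (z - w)
  rw [← sq_le_one_iff₀ (norm_nonneg _), norm_cayley_sq]
  exact div_le_one_of_le₀ (le_add_of_nonneg_right (by positivity)) (by positivity)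

lemma norm_cayley_lt_one (hw : 0 < w.im) (hz : 0 < z.im) : ‖cayley w z‖ < 1 := by
  have hdist := normSq_nonneg (z - w)
  rw [← sq_lt_one_iff₀ (norm_nonneg _), norm_cayley_sq, div_lt_one (by positivity)]
  exact lt_add_of_pos_right _ (by positivity)

lemma differentiableOn_cayley (hw : 0 < w.im) :
    DifferentiableOn ℂ (cayley w) {z | 0 ≤ z.im} :=
  DifferentiableOn.fun_div (by fun_prop) (by fun_prop) fun _ hz ↦ sub_conj_ne_zero hw hz

lemma one_sub_ne_zero_of_norm_lt_one (hζ : ‖ζ‖ < 1) : 1 - ζ ≠ 0 :=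
  sub_ne_zero.mpr fun h ↦ by simp [← h] at hζ

lemma im_cayleyInv (w ζ : ℂ) :
    (cayleyInv w ζ).im = w.im * (1 - ‖ζ‖ ^ 2) / normSq (1 - ζ) := by
  rw [cayleyInv, div_im, ← sub_div, ← normSq_eq_norm_sq]
  simp only [normSq_apply, sub_re, sub_im, mul_re, mul_im, conj_re, conj_im, one_re, one_im]
  ring

lemma mapsTo_cayleyInv (hw : 0 < w.im) :
    MapsTo (cayleyInv w) (ball 0 1) upperHalfPlaneSet := fun ζ hζ ↦ by
  have hζ : ‖ζ‖ < 1 := mem_ball_zero_iff.mp hζ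
  have hsq : ‖ζ‖ ^ 2 < 1 := (sq_lt_one_iff₀ (norm_nonneg ζ)).mpr hζ
  have hden : 0 < normSq (1 - ζ) := normSq_pos.mpr (one_sub_ne_zero_of_norm_lt_one hζ)
  change 0 < (cayleyInv w ζ).im
  rw [im_cayleyInv]
  exact div_pos (mul_pos hw (sub_pos.mpr hsq)) hden

lemma differentiableOn_cayleyInv (w : ℂ) : DifferentiableOn ℂ (cayleyInv w) (ball 0 1) :=
  DifferentiableOn.fun_div (by fun_prop) (by fun_prop) fun _ hζ ↦
    one_sub_ne_zero_of_norm_lt_one (mem_ball_zero_iff.mp hζ)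

lemma cayleyInv_cayley (hw : 0 < w.im) (hz : 0 < z.im) : cayleyInv w (cayley w z) = z := by
  have hzw := sub_conj_ne_zero hw hz.le
  rw [cayleyInv, div_eq_iff (one_sub_ne_zero_of_norm_lt_one (norm_cayley_lt_one hw hz)), cayley]
  field_simp
  ring

variable {F : ℂ → ℂ}

lemma norm_cayley_map_le (hF : DifferentiableOn ℂ F upperHalfPlaneSet)
    (hFim : ∀ z : ℂ, 0 < z.im → 0 ≤ (F z).im) (hz : 0 < z.im) (hw : 0 < w.im)
    (hFw : 0 < (F w).im) :
    ‖cayley (F w) (F z)‖ ≤ ‖cayley w z‖ := by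
  let G : ℂ → ℂ := cayley (F w) ∘ F ∘ cayleyInv w
  have hGdiff : DifferentiableOn ℂ G (ball 0 1) :=
    (differentiableOn_cayley hFw).comp
      (hF.comp (differentiableOn_cayleyInv w) (mapsTo_cayleyInv hw))
      fun ζ hζ ↦ hFim _ (mapsTo_cayleyInv hw hζ)
  have hGmaps : MapsTo G (ball 0 1) (closedBall 0 1) := fun ζ hζ ↦
    mem_closedBall_zero_iff.mpr <| norm_cayley_le_one hFw <| hFim _ (mapsTo_cayleyInv hw hζ)
  have hG0 : G 0 = 0 := by simp [G, cayley, cayleyInv]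
  simpa only [G, Function.comp_apply, cayleyInv_cayley hw hz] using
    norm_le_norm_of_mapsTo_ball hGdiff hGmaps hG0 (norm_cayley_lt_one hw hz)

lemma normSq_sub_mul_im_le_of_im_pos (hF : DifferentiableOn ℂ F upperHalfPlaneSet)
    (hFim : ∀ z : ℂ, 0 < z.im → 0 < (F z).im) (hz : 0 < z.im) (hw : 0 < w.im) :
    normSq (F z - F w) * (z.im * w.im) ≤ normSq (z - w) * ((F z).im * (F w).im) := by
  have hFz := hFim z hz
  have hFw := hFim w hw
  have hdist := normSq_nonneg (z - w)
  have hdistF := normSq_nonneg (F z - F w)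
  have hsq := pow_le_pow_left₀ (norm_nonneg _)
    (norm_cayley_map_le hF (fun z hz ↦ (hFim z hz).le) hz hw hFw) 2
  rw [norm_cayley_sq, norm_cayley_sq, div_le_div_iff₀ (by positivity) (by positivity)] at hsq
  linarith

lemma normSq_sub_mul_im_le (hF : DifferentiableOn ℂ F upperHalfPlaneSet)
    (hFim : ∀ z : ℂ, 0 < z.im → 0 ≤ (F z).im) (hz : 0 < z.im) (hw : 0 < w.im) :
    normSq (F z - F w) * (z.im * w.im) ≤ normSq (z - w) * ((F z).im * (F w).im) := by
  have hperturbed (δ : ℝ) (hδ : 0 < δ) : normSq (F z - F w) * (z.im * w.im) ≤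
      normSq (z - w) * (((F z).im + δ) * ((F w).im + δ)) := by
    have hpos (z : ℂ) (hz : 0 < z.im) : 0 < (F z + δ * I).im := by
      simpa using add_pos_of_nonneg_of_pos (hFim z hz) hδ
    simpa using normSq_sub_mul_im_le_of_im_pos (hF.add_const (δ * I)) hpos hz hw
  have hlim : Tendsto (fun δ : ℝ ↦ normSq (z - w) * (((F z).im + δ) * ((F w).im + δ)))
      (𝓝[>] 0) (𝓝 (normSq (z - w) * ((F z).im * (F w).im))) := by
    refine Tendsto.mono_left (Continuous.tendsto' (by fun_prop) _ _ ?_) nhdsWithin_le_nhds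
    simp only [add_zero]
  exact ge_of_tendsto hlim (eventually_mem_nhdsWithin.mono hperturbed)

end SchwarzPick

section VerticalApproach

variable {f : ℂ → ℂ} {x : ℝ}

lemma tendsto_add_mul_I_of_continuousAt (hf : ContinuousAt f x) :
    Tendsto (fun ε : ℝ ↦ f (x + ε * I)) (𝓝[>] 0) (𝓝 (f x)) := by
  refine hf.tendsto.comp (Tendsto.mono_left (Continuous.tendsto' (by fun_prop) _ _ ?_)
    nhdsWithin_le_nhds)
  simp

lemma tendsto_im_add_mul_I_div {f' : ℂ} (hf : HasDerivAt f f' x) (hreal : (f x).im = 0) :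
    Tendsto (fun ε : ℝ ↦ (f (x + ε * I)).im / ε) (𝓝[>] 0) (𝓝 f'.re) := by
  have hline : HasDerivAt (fun ζ : ℂ ↦ (x : ℂ) + ζ * I) I ((0 : ℝ) : ℂ) := by
    simpa using ((hasDerivAt_id ((0 : ℝ) : ℂ)).mul_const I).const_add (x : ℂ)
  have hcomp : HasDerivAt (fun ε : ℝ ↦ f (x + ε * I)) (f' * I) 0 :=
    (HasDerivAt.comp ((0 : ℝ) : ℂ) (h₂ := f) (by simpa using hf) hline).comp_ofReal
  have him := (continuous_im.tendsto _).comp hcomp.tendsto_slope_zero_right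
  rw [mul_I_im] at him
  refine him.congr fun ε ↦ ?_
  simp only [Function.comp_apply, zero_add, ofReal_zero, zero_mul, add_zero, smul_im, sub_im,
    hreal, sub_zero, smul_eq_mul, div_eq_inv_mul]

end VerticalApproach

/-- `f` is a Pick function that continues analytically across `J ⊆ ℝ`. The symmetry
`f (conj z) = conj (f z)` is encoded by requiring `f` to be real on `J`. -/
structure IsPickOn (J : Set ℝ) (f : ℂ → ℂ) : Prop where
  differentiableOn : DifferentiableOn ℂ f (CSlit J)
  im_ofReal : ∀ x ∈ J, (f (x : ℂ)).im = 0
  im_nonneg : ∀ z : ℂ, 0 < z.im → 0 ≤ (f z).im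

lemma isOpen_CSlit {J : Set ℝ} (hJ : IsOpen J) : IsOpen (CSlit J) :=
  (isOpen_ne_fun continuous_im continuous_const).union (hJ.preimage continuous_re)

lemma ofReal_mem_CSlit {J : Set ℝ} {x : ℝ} (hx : x ∈ J) : (x : ℂ) ∈ CSlit J :=
  Or.inr hx

lemma upperHalfPlaneSet_subset_CSlit (J : Set ℝ) : upperHalfPlaneSet ⊆ CSlit J :=
  fun _ hz ↦ Or.inl (ne_of_gt hz)

namespace IsPickOn

variable {J : Set ℝ} {f : ℂ → ℂ} {x y : ℝ}

lemma hasDerivAt (hf : IsPickOn J f) (hJ : IsOpen J) (hx : x ∈ J) :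
    HasDerivAt f (deriv f x) (x : ℂ) :=
  (hf.differentiableOn.differentiableAt
    ((isOpen_CSlit hJ).mem_nhds (ofReal_mem_CSlit hx))).hasDerivAt

lemma hasDerivAt_re (hf : IsPickOn J f) (hJ : IsOpen J) (hx : x ∈ J) :
    HasDerivAt (fun s : ℝ ↦ (f s).re) (deriv f x).re x :=
  (hf.hasDerivAt hJ hx).real_of_complex

lemma tendsto_im_div (hf : IsPickOn J f) (hJ : IsOpen J) (hx : x ∈ J) :
    Tendsto (fun ε : ℝ ↦ (f (x + ε * I)).im / ε) (𝓝[>] 0)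
      (𝓝 (deriv (fun s : ℝ ↦ (f s).re) x)) := by
  rw [(hf.hasDerivAt_re hJ hx).deriv]
  exact tendsto_im_add_mul_I_div (hf.hasDerivAt hJ hx) (hf.im_ofReal x hx)

lemma deriv_re_nonneg (hf : IsPickOn J f) (hJ : IsOpen J) (hx : x ∈ J) :
    0 ≤ deriv (fun s : ℝ ↦ (f s).re) x := by
  refine ge_of_tendsto (hf.tendsto_im_div hJ hx) ?_
  filter_upwards [self_mem_nhdsWithin] with ε (hε : 0 < ε)
  exact div_nonneg (hf.im_nonneg _ (by simpa using hε)) hε.le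

lemma normSq_sub_le_mul_im_div (hf : IsPickOn J f) (x y : ℝ) {ε : ℝ} (hε : 0 < ε) :
    normSq (f (x + ε * I) - f (y + ε * I)) ≤
      (x - y) ^ 2 * ((f (x + ε * I)).im / ε * ((f (y + ε * I)).im / ε)) := by
  have him (s : ℝ) : ((s : ℂ) + ε * I).im = ε := by simp
  have hdist : normSq ((x : ℂ) + ε * I - (y + ε * I)) = (x - y) ^ 2 := by
    rw [add_sub_add_right_eq_sub, ← ofReal_sub, normSq_ofReal, sq]
  have hpick := normSq_sub_mul_im_le
    (hf.differentiableOn.mono (upperHalfPlaneSet_subset_CSlit J)) hf.im_nonneg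
    (z := x + ε * I) (w := y + ε * I) (by rwa [him]) (by rwa [him])
  rw [him, him, hdist] at hpick
  rwa [div_mul_div_comm, ← mul_div_assoc, le_div_iff₀ (by positivity)]

theorem loewner_inequality (hf : IsPickOn J f) (hJ : IsOpen J) (hx : x ∈ J) (hy : y ∈ J) :
    ((f x).re - (f y).re) ^ 2 ≤ (x - y) ^ 2 *
      (deriv (fun s : ℝ ↦ (f s).re) x * deriv (fun s : ℝ ↦ (f s).re) y) := by
  have hleft : Tendsto (fun ε : ℝ ↦ normSq (f (x + ε * I) - f (y + ε * I))) (𝓝[>] 0)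
      (𝓝 (normSq (f x - f y))) :=
    (continuous_normSq.tendsto _).comp <|
      (tendsto_add_mul_I_of_continuousAt (hf.hasDerivAt hJ hx).continuousAt).sub
        (tendsto_add_mul_I_of_continuousAt (hf.hasDerivAt hJ hy).continuousAt)
  have hright := ((hf.tendsto_im_div hJ hx).mul (hf.tendsto_im_div hJ hy)).const_mul ((x - y) ^ 2)
  have hnormSq : normSq (f x - f y) = ((f x).re - (f y).re) ^ 2 := by
    rw [normSq_apply, sub_re, sub_im, hf.im_ofReal x hx, hf.im_ofReal y hy]
    ring
  rw [← hnormSq]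
  refine le_of_tendsto_of_tendsto hleft hright ?_
  filter_upwards [self_mem_nhdsWithin] with ε hε
  exact hf.normSq_sub_le_mul_im_div x y hε

theorem two_mul_sub_le_mul_deriv_add_deriv (hf : IsPickOn J f) (hJ : IsOpen J) (hx : x ∈ J)
    (hy : y ∈ J) (hxy : x ≤ y) :
    2 * ((f y).re - (f x).re) ≤ (y - x) *
      (deriv (fun s : ℝ ↦ (f s).re) x + deriv (fun s : ℝ ↦ (f s).re) y) := by
  have hloewner := hf.loewner_inequality hJ hx hy
  have hdx := hf.deriv_re_nonneg hJ hx
  have hdy := hf.deriv_re_nonneg hJ hy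
  set dx := deriv (fun s : ℝ ↦ (f s).re) x
  set dy := deriv (fun s : ℝ ↦ (f s).re) y
  refine le_of_sq_le_sq ?_ (mul_nonneg (sub_nonneg.mpr hxy) (add_nonneg hdx hdy))
  calc (2 * ((f y).re - (f x).re)) ^ 2
      = 4 * ((f x).re - (f y).re) ^ 2 := by ring
    _ ≤ 4 * ((x - y) ^ 2 * (dx * dy)) := by gcongr
    _ = (y - x) ^ 2 * (4 * dx * dy) := by ring
    _ ≤ (y - x) ^ 2 * (dx + dy) ^ 2 := by gcongr; exact four_mul_le_sq_add dx dy
    _ = ((y - x) * (dx + dy)) ^ 2 := by ring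

end IsPickOn

section DividedDifference

variable {u : ℝ → ℝ} {a c m x : ℝ}

/-- The confluent second-order divided difference `u[c, c, x]`, i.e. the first-order Taylor
remainder of `u` at `c` divided by `(x - c)²`. Its value at `x = c` is the junk value `0`. -/
def confluentDividedDifference (u : ℝ → ℝ) (c x : ℝ) : ℝ :=
  (u x - u c - deriv u c * (x - c)) / (x - c) ^ 2

lemma hasDerivAt_confluentDividedDifference (hu : DifferentiableAt ℝ u x) (hxc : x ≠ c) :
    HasDerivAt (confluentDividedDifference u c)
      (((x - c) * (deriv u x + deriv u c) - 2 * (u x - u c)) / (x - c) ^ 3) x := by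
  have hne : x - c ≠ 0 := sub_ne_zero.mpr hxc
  have hsub : HasDerivAt (fun y ↦ y - c) 1 x := (hasDerivAt_id x).sub_const c
  have hnum : HasDerivAt (fun y ↦ u y - u c - deriv u c * (y - c))
      (deriv u x - deriv u c * 1) x :=
    (hu.hasDerivAt.sub_const (u c)).sub (hsub.const_mul (deriv u c))
  refine (hnum.fun_div (hsub.fun_pow 2) (pow_ne_zero 2 hne)).congr_deriv ?_
  field_simp
  ring

lemma monotoneOn_confluentDividedDifference (hu : ∀ x ∈ Ioo a c, DifferentiableAt ℝ u x)
    (htrapezoid : ∀ x ∈ Ioo a c, 2 * (u c - u x) ≤ (c - x) * (deriv u x + deriv u c)) :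
    MonotoneOn (confluentDividedDifference u c) (Ioo a c) := by
  have hderiv (x) (hx : x ∈ Ioo a c) :=
    hasDerivAt_confluentDividedDifference (hu x hx) hx.2.ne
  refine monotoneOn_of_deriv_nonneg (convex_Ioo a c)
    (fun x hx ↦ (hderiv x hx).continuousAt.continuousWithinAt) ?_ ?_ <;> rw [interior_Ioo]
  · exact fun x hx ↦ (hderiv x hx).differentiableAt.differentiableWithinAt
  · intro x hx
    rw [(hderiv x hx).deriv]
    refine div_nonneg_of_nonpos ?_ (Odd.pow_nonpos (by decide) (sub_nonpos.mpr hx.2.le))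
    linarith [htrapezoid x hx]

lemma le_confluentDividedDifference_of_monotoneOn
    (hmono : MonotoneOn (confluentDividedDifference u c) (Ioo a c))
    (hm : ∀ x ∈ Ioo a c, m ≤ u x) (hx : x ∈ Ioo a c) :
    (m - u c - deriv u c * (a - c)) / (a - c) ^ 2 ≤ confluentDividedDifference u c x := by
  have hlim : Tendsto (fun y ↦ (m - u c - deriv u c * (y - c)) / (y - c) ^ 2) (𝓝[>] a)
      (𝓝 ((m - u c - deriv u c * (a - c)) / (a - c) ^ 2)) := by
    have hne : (a - c) ^ 2 ≠ 0 := pow_ne_zero 2 (sub_ne_zero.mpr (hx.1.trans hx.2).ne)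
    exact tendsto_nhdsWithin_of_tendsto_nhds <|
      Tendsto.div (Continuous.tendsto (by fun_prop) a) (Continuous.tendsto (by fun_prop) a) hne
  refine le_of_tendsto hlim ?_
  filter_upwards [Ioo_mem_nhdsGT hx.1] with y hy
  have hyc : y ∈ Ioo a c := ⟨hy.1, hy.2.trans hx.2⟩
  calc (m - u c - deriv u c * (y - c)) / (y - c) ^ 2
      ≤ confluentDividedDifference u c y := by
        rw [confluentDividedDifference]
        gcongr
        exact hm y hyc
    _ ≤ confluentDividedDifference u c x := hmono hyc hx hy.2.le

lemma quadratic_le_of_monotoneOn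
    (hmono : MonotoneOn (confluentDividedDifference u c) (Ioo a c))
    (hm : ∀ x ∈ Ioo a c, m ≤ u x) (hx : x ∈ Ioo a c) :
    u c - deriv u c * (c - x) + (deriv u c * (c - a) + m - u c) * (x - c) ^ 2 / (c - a) ^ 2
      ≤ u x := by
  have hbound := le_confluentDividedDifference_of_monotoneOn hmono hm hx
  rw [confluentDividedDifference, le_div_iff₀ (sq_pos_of_neg (sub_neg.mpr hx.2)),
    sub_sq_comm a c] at hbound
  calc u c - deriv u c * (c - x) + (deriv u c * (c - a) + m - u c) * (x - c) ^ 2 / (c - a) ^ 2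
      = u c + deriv u c * (x - c) +
          (m - u c - deriv u c * (a - c)) / (c - a) ^ 2 * (x - c) ^ 2 := by ring
    _ ≤ u x := by linarith

end DividedDifference

theorem stmt15_general {J : Set ℝ} (hJ : IsOpen J) {f : ℂ → ℂ} (hf : IsPickOn J f)
    {a c m t : ℝ} (hac : Ioc a c ⊆ J) (ht : t = deriv (fun s : ℝ ↦ (f s).re) c)
    (hm : ∀ x ∈ Ioo a c, m ≤ (f x).re) :
    ∀ x ∈ Ioo a c,
      (f c).re - t * (c - x) + (t * (c - a) + m - (f c).re) * (x - c) ^ 2 / (c - a) ^ 2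
        ≤ (f x).re := by
  intro x hx
  have hmemJ (y) (hy : y ∈ Ioo a c) : y ∈ J := hac (Ioo_subset_Ioc_self hy)
  have hc : c ∈ J := hac (right_mem_Ioc.mpr (hx.1.trans hx.2))
  have hmono : MonotoneOn (confluentDividedDifference (fun s : ℝ ↦ (f s).re) c) (Ioo a c) :=
    monotoneOn_confluentDividedDifference
      (fun y hy ↦ (hf.hasDerivAt_re hJ (hmemJ y hy)).differentiableAt)
      fun y hy ↦ hf.two_mul_sub_le_mul_deriv_add_deriv hJ (hmemJ y hy) hc hy.2.le
  rw [ht]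
  exact quadratic_le_of_monotoneOn hmono hm hx

lemma MemA1.isPickOn {c₁ c₂ c₃ c₄ : ℝ} {f : ℂ → ℂ} (hf : MemA1 c₁ c₂ c₃ c₄ f) :
    IsPickOn (Ioo (-1) 1) f where
  differentiableOn := hf.holo
  im_ofReal x hx := conj_eq_iff_im.mp <| by
    rw [← hf.symm x (ofReal_mem_CSlit hx), conj_ofReal]
  im_nonneg z hz := hf.upper z (Or.inl hz.ne') hz

theorem stmt15 (c₁ c₂ c₃ c₄ : ℝ)
    (h1 : -1 < c₁) (h12 : c₁ < c₂) (h2 : c₂ < 1)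
    (h3 : -1 < c₃) (h34 : c₃ < c₄) (h4 : c₄ < 1)
    (f : ℂ → ℂ) (hf : MemA1 c₁ c₂ c₃ c₄ f)
    (t m : ℝ)
    (ht : t = deriv (fun y : ℝ => (f y).re) c₁)
    (hm : ∀ x ∈ Set.Ioo (-1 : ℝ) 1, m ≤ (f x).re) :
    ∀ x ∈ Set.Ioo (-1 : ℝ) c₁,
      c₃ - t * (c₁ - x) +
          (t * (1 + c₁) + m - c₃) * (x - c₁) ^ 2 / (1 + c₁) ^ 2 ≤ (f x).re := by
  have hsub : Ioc (-1) c₁ ⊆ Ioo (-1) 1 := Ioc_subset_Ioo_right (h12.trans h2)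
  have hbound := stmt15_general isOpen_Ioo hf.isPickOn hsub ht
    fun x hx ↦ hm x (hsub (Ioo_subset_Ioc_self hx))
  simpa only [hf.val1, ofReal_re, sub_neg_eq_add, add_comm c₁ 1] using hbound
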